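/- Let W be a classical–quantum channel from a finite alphabet X with |X| = a into the density operators on ℂ^d. For every λ ∈ (0,1) there exists a constant K (depending only on λ, a and d) such that for all positive integers n, |log₂ N(n,λ) − n·C(W)| ≤ K·√n, where N(n,λ) is the maximal size of an (n,λ)-code for W and C(W) = max_P I(P;W) is the channel capacity. -/

import Mathlib

open Matrix BigOperators Finset
open scoped Classical ComplexOrder

noncomputable section

/-- Square complex matrices of size `d` (operators on `ℂ^d`). -/
abbrev Mat (d : ℕ) := Matrix (Fin d) (Fin d) ℂ

/-- Operators on the `n`-fold tensor power `(ℂ^d)^{⊗n}`, indexed by `Fin n → Fin d`. -/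
abbrev MatPow (d n : ℕ) := Matrix (Fin n → Fin d) (Fin n → Fin d) ℂ

/-- Tensor product `A 0 ⊗ A 1 ⊗ ⋯ ⊗ A (n-1)` of a family of `d × d` matrices. -/
def tensorPow {d n : ℕ} (A : Fin n → Mat d) : MatPow d n :=
  Matrix.of fun j k => ∏ i, A i (j i) (k i)

/-- Exponential to base 2. -/
def exp2 (t : ℝ) : ℝ := (2 : ℝ) ^ t

/-- `P` is a probability distribution on the finite set `X`. -/
def IsProbDist {X : Type*} [Fintype X] (P : X → ℝ) : Prop :=
  (∀ x, 0 ≤ P x) ∧ ∑ x, P x = 1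

/-- `ρ` is a density operator (a state): positive semidefinite with trace one. -/
def IsState {ι : Type*} [Fintype ι] [DecidableEq ι] (ρ : Matrix ι ι ℂ) : Prop :=
  ρ.PosSemidef ∧ ρ.trace = 1

/-- `N(x|x^n)`: number of occurrences of the letter `x` in the sequence `xs`. -/
def countIn {X : Type*} {n : ℕ} (x : X) (xs : Fin n → X) : ℕ :=
  (Finset.univ.filter fun i => xs i = x).card

/-- The variance-typical set `T^n_{P,δ}`. -/
def typicalSet {X : Type*} [Fintype X] (n : ℕ) (P : X → ℝ) (δ : ℝ) :
    Finset (Fin n → X) :=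
  Finset.univ.filter fun xs => ∀ x : X,
    |(countIn x xs : ℝ) - n * P x| ≤ δ * Real.sqrt n * Real.sqrt (P x * (1 - P x))

/-- Product (i.i.d.) probability `P^{⊗n}(A)` of a set `A` of sequences. -/
def prodProb {X : Type*} [Fintype X] {n : ℕ} (P : X → ℝ) (A : Finset (Fin n → X)) : ℝ :=
  ∑ xs ∈ A, ∏ i, P (xs i)

/-- Shannon entropy to base 2. -/
def shannonEntropy {X : Type*} [Fintype X] (P : X → ℝ) : ℝ :=
  -∑ x, P x * Real.logb 2 (P x)

/-- von Neumann entropy to base 2, `H(ρ) = -Tr(ρ log₂ ρ)`, via the eigenvalues. -/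
def vnEntropy {d : ℕ} (ρ : Mat d) : ℝ :=
  if h : ρ.IsHermitian then -∑ i, h.eigenvalues i * Real.logb 2 (h.eigenvalues i) else 0

/-- The constant `K = 2 log₂(e) / e`. -/
def Kconst : ℝ := 2 * Real.logb 2 (Real.exp 1) / Real.exp 1

/-- A diagonalization `ρ = Σ_j R j • π j` into one-dimensional mutually orthogonal
eigenprojectors, with eigenvalue list `R` a probability distribution. -/
def IsDiagonalization {d : ℕ} (ρ : Mat d) (R : Fin d → ℝ) (π : Fin d → Mat d) : Prop :=
  (∀ j, (π j).PosSemidef) ∧ (∀ j, π j * π j = π j) ∧ (∀ j, (π j).trace = 1) ∧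
    (∀ j k, j ≠ k → π j * π k = 0) ∧ (∑ j, π j = 1) ∧
    ρ = ∑ j, (R j : ℂ) • π j ∧ IsProbDist R

/-- The variance-typical projector `Π^n_{ρ,δ}` of a state with fixed diagonalization
`(R, π)`. -/
def typicalProj {d : ℕ} (n : ℕ) (R : Fin d → ℝ) (π : Fin d → Mat d) (δ : ℝ) : MatPow d n :=
  ∑ js ∈ typicalSet n R δ, tensorPow fun i => π (js i)

/-- `B` is an `η`-shadow of the state `σ`: `0 ≤ B ≤ 1` and `Tr(σB) ≥ η`. -/
def IsShadow {ι : Type*} [Fintype ι] [DecidableEq ι] (σ B : Matrix ι ι ℂ) (η : ℝ) : Prop :=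
  B.PosSemidef ∧ ((1 : Matrix ι ι ℂ) - B).PosSemidef ∧ η ≤ (Matrix.trace (σ * B)).re

/-- Average state `PW = Σ_x P(x) W_x` of a cq-channel under input distribution `P`. -/
def avgState {X : Type*} [Fintype X] {d : ℕ} (P : X → ℝ) (W : X → Mat d) : Mat d :=
  ∑ x, (P x : ℂ) • W x

/-- Conditional von Neumann entropy `H(W|P) = Σ_x P(x) H(W_x)`. -/
def condEntropy {X : Type*} [Fintype X] {d : ℕ} (P : X → ℝ) (W : X → Mat d) : ℝ :=
  ∑ x, P x * vnEntropy (W x)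

/-- Mutual information `I(P;W) = H(PW) − H(W|P)`. -/
def mutualInfo {X : Type*} [Fintype X] {d : ℕ} (P : X → ℝ) (W : X → Mat d) : ℝ :=
  vnEntropy (avgState P W) - condEntropy P W

/-- Capacity `C(W) = max_P I(P;W)`. -/
def capacity {X : Type*} [Fintype X] {d : ℕ} (W : X → Mat d) : ℝ :=
  sSup {c | ∃ P : X → ℝ, IsProbDist P ∧ c = mutualInfo P W}

/-- `(f, D)` (with message set `M` inside the outcome index set `M'`) is an
`(n,λ)`-code for the cq-channel `W`: the `D m` are positive semidefinite, sum to the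
identity, and each message is decoded correctly with probability at least `1 - λ`. -/
def IsCode {X : Type*} [Fintype X] {d n : ℕ} (W : X → Mat d) (lam : ℝ)
    {M' : Type*} [Fintype M'] (M : Finset M') (f : M' → Fin n → X)
    (D : M' → MatPow d n) : Prop :=
  (∀ m, (D m).PosSemidef) ∧ (∑ m, D m = 1) ∧
    ∀ m ∈ M, 1 - lam ≤ (Matrix.trace (tensorPow (fun i => W (f m i)) * D m)).re

/-- `N(n,λ)`: maximal size of an `(n,λ)`-code for `W`. -/
def maxCodeSize {X : Type*} [Fintype X] (d : ℕ) (W : X → Mat d) (n : ℕ) (lam : ℝ) : ℕ :=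
  sSup {k | ∃ (M' : Type) (_ : Fintype M') (M : Finset M') (f : M' → Fin n → X)
    (D : M' → MatPow d n), IsCode W lam M f D ∧ M.card = k}

/-- Trace norm `‖A‖₁ = Tr|A|`: the sum of the singular values. -/
def traceNorm {ι : Type*} [Fintype ι] [DecidableEq ι] (A : Matrix ι ι ℂ) : ℝ :=
  ∑ i, Real.sqrt ((Matrix.posSemidef_conjTranspose_mul_self A).1.eigenvalues i)

/-- Trace distance `D(ρ,σ) = ½‖ρ−σ‖₁`. -/
def traceDist {ι : Type*} [Fintype ι] [DecidableEq ι] (ρ σ : Matrix ι ι ℂ) : ℝ :=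
  traceNorm (ρ - σ) / 2

/-- (Pure-state) fidelity `F(ρ,σ) = Tr(ρσ)`. -/
def fidelity {ι : Type*} [Fintype ι] [DecidableEq ι] (ρ σ : Matrix ι ι ℂ) : ℝ :=
  (Matrix.trace (ρ * σ)).re

/-- A pure state: the rank-one orthogonal projector `|ψ⟩⟨ψ|` onto the span of a
unit vector `ψ`. -/
def IsPureState {ι : Type*} [Fintype ι] (ρ : Matrix ι ι ℂ) : Prop :=
  ∃ ψ : ι → ℂ, (∑ i, star (ψ i) * ψ i) = 1 ∧ ρ = Matrix.vecMulVec ψ (star ψ)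

/-- The set of eigenvalue-index sequences `js` that are variance-typical, with
constant `δ`, for the distribution `q x` on each block `I_x = {i : xs i = x}`. -/
def condTypicalSet {X : Type*} [Fintype X] {n d : ℕ} (xs : Fin n → X)
    (q : X → Fin d → ℝ) (δ : ℝ) : Finset (Fin n → Fin d) :=
  Finset.univ.filter fun js => ∀ (x : X) (k : Fin d),
    |((Finset.univ.filter fun i => xs i = x ∧ js i = k).card : ℝ) - (countIn x xs : ℝ) * q x k|
      ≤ δ * Real.sqrt (countIn x xs) * Real.sqrt (q x k * (1 - q x k))

/-- Conditional variance-typical projector `Π^n_{W,δ}(x^n) = ⊗_{x∈X} Π^{I_x}_{W_x,δ}`,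
with respect to fixed diagonalizations `W_x = Σ_j (q x j) • (π x j)`. -/
def condTypicalProj {X : Type*} [Fintype X] {d : ℕ} {n : ℕ} (xs : Fin n → X)
    (q : X → Fin d → ℝ) (π : X → Fin d → Mat d) (δ : ℝ) : MatPow d n :=
  ∑ js ∈ condTypicalSet xs q δ, tensorPow fun i => π (xs i) (js i)

/-!
For an input distribution `P`, Chebyshev's inequality shows that, up to a mass `ε`, the eigenvalues
of the output states are `2 ^ (-(n * H) ± c)` with `c` of order `√n`; here `H` is `H(W|P)` for the
outputs of single codewords and `H(PW)` for their average.

Direct part: in a maximal code whose decoding operators have trace at most `2 ^ (n * H(W|P) + c)`,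
the sum `B` of these operators catches a constant fraction of the average output state, since
otherwise the typical projection of some further word, conjugated by `√(1 - B)`, would decode that
word. As the average state is essentially bounded by `2 ^ (-n * H(PW) + c)`, the trace of `B`, and
with it the code, is large.

Strong converse: there are at most `(n + 1) ^ a` types, so it suffices to bound the number of
codewords of a fixed type `P`. Pinching with the typical projection of the tensor power of `PW`
shows that each output state is essentially at most `2 ^ (n * I(P;W) + 2 * c)` times that tensor
power, against which the total success probability of the decoding operators is at most one.
-/

/-! ### Typical sequences of product distributions -/

section ProductDistributions

variable {ι : Type*} [Fintype ι] [DecidableEq ι] {Ω : ι → Type*} [∀ i, Fintype (Ω i)]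

/-- The probability mass function with weights `p`. -/
def IsProbDist.toPMF {Y : Type*} [Fintype Y] {p : Y → ℝ} (hp : IsProbDist p) : PMF Y :=
  PMF.ofFintype (fun y => ENNReal.ofReal (p y)) <| by
    rw [← ENNReal.ofReal_sum_of_nonneg fun y _ => hp.1 y, hp.2, ENNReal.ofReal_one]

theorem IsProbDist.toReal_toPMF {Y : Type*} [Fintype Y] {p : Y → ℝ} (hp : IsProbDist p) (y : Y) :
    (hp.toPMF y).toReal = p y :=
  ENNReal.toReal_ofReal (hp.1 y)

theorem IsProbDist.prod {p : ∀ i, Ω i → ℝ} (hp : ∀ i, IsProbDist (p i)) :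
    IsProbDist fun ω : ∀ i, Ω i => ∏ i, p i (ω i) := by
  refine ⟨fun ω => prod_nonneg fun i _ => (hp i).1 _, ?_⟩
  rw [← Fintype.piFinset_univ, ← prod_univ_sum]
  exact prod_eq_one fun i _ => (hp i).2

open MeasureTheory ProbabilityTheory in
theorem chebyshev_prod {p : ∀ i, Ω i → ℝ} (hp : ∀ i, IsProbDist (p i)) (g : ∀ i, Ω i → ℝ)
    {c : ℝ} (hc : 0 < c) :
    ∑ ω : ∀ i, Ω i with c ≤ |∑ i, g i (ω i) - ∑ i, ∑ o, p i o * g i o|, ∏ i, p i (ω i) ≤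
      (∑ i, ∑ o, p i o * g i o ^ 2) / c ^ 2 := by
  let _ : ∀ i, MeasurableSpace (Ω i) := fun _ => ⊤
  let μ : ∀ i, Measure (Ω i) := fun i => (hp i).toPMF.toMeasure
  have integral_μ (i : ι) (f : Ω i → ℝ) : ∫ o, f o ∂μ i = ∑ o, p i o * f o := by
    simp only [μ, PMF.integral_eq_sum, IsProbDist.toReal_toPMF, smul_eq_mul]
  have hg (i : ι) : MemLp (g i) 2 (μ i) := .of_discrete
  let Z : (∀ i, Ω i) → ℝ := ∑ i, fun ω => g i (ω i)
  have mean : ∫ ω, Z ω ∂Measure.pi μ = ∑ i, ∑ o, p i o * g i o := by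
    simp only [Z, Finset.sum_apply]
    rw [integral_finsetSum _ fun i _ => .of_finite]
    exact sum_congr rfl fun i _ =>
      (integral_comp_eval (hg i).aestronglyMeasurable).trans (integral_μ i _)
  have variance_le : Var[Z; Measure.pi μ] ≤ ∑ i, ∑ o, p i o * g i o ^ 2 := by
    rw [variance_sum_pi hg]
    exact sum_le_sum fun i _ => (variance_le_expectation_sq (hg i).aestronglyMeasurable).trans_eq
      (integral_μ i fun o => g i o ^ 2)
  have weight (ω : ∀ i, Ω i) : (Measure.pi μ).real {ω} = ∏ i, p i (ω i) := by
    simp only [measureReal_def, Measure.pi_singleton, μ, ENNReal.toReal_prod,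
      PMF.toMeasure_apply_singleton _ _ (measurableSet_singleton _), IsProbDist.toReal_toPMF]
  have tail := ENNReal.toReal_mono ENNReal.ofReal_ne_top
    (meas_ge_le_variance_div_sq (μ := Measure.pi μ) (X := Z) .of_discrete hc)
  rw [ENNReal.toReal_ofReal (div_nonneg (variance_nonneg _ _) (sq_nonneg c)), mean] at tail
  calc _ = (Measure.pi μ).real {ω | c ≤ |Z ω - ∑ i, ∑ o, p i o * g i o|} := by
        simp only [← weight, sum_measureReal_singleton, coe_filter, mem_univ, true_and, Z,
          Finset.sum_apply]
    _ ≤ _ := tail.trans (by gcongr)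

/-- The entropy-typical sequences: those whose weight under the product of the `q i` is within a
factor `2 ^ c` of `2 ^ (-h)`. Sequences are drawn from a possibly different product distribution,
and `h` is the cross entropy of the two. -/
def entropyTypical (q : ∀ i, Ω i → ℝ) (h c : ℝ) : Finset (∀ i, Ω i) :=
  {ω | ∏ i, q i (ω i) ∈ Set.Icc ((2 : ℝ) ^ (-h - c)) (2 ^ (-h + c))}

theorem one_sub_le_sum_entropyTypical {p q : ∀ i, Ω i → ℝ} (hp : ∀ i, IsProbDist (p i))
    (hpq : ∀ i o, 0 < p i o → 0 < q i o) {h c ε : ℝ} (hc : 0 < c)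
    (mean : ∑ i, ∑ o, p i o * Real.logb 2 (q i o) = -h)
    (moment : ∑ i, ∑ o, p i o * Real.logb 2 (q i o) ^ 2 ≤ ε * c ^ 2) :
    1 - ε ≤ ∑ ω ∈ entropyTypical q h c, ∏ i, p i (ω i) := by
  have atypical : ∑ ω ∈ (entropyTypical q h c)ᶜ, ∏ i, p i (ω i) ≤ ε := by
    refine le_trans ?_ ((chebyshev_prod hp (fun i o => Real.logb 2 (q i o)) hc).trans
      ((div_le_iff₀ (by positivity)).2 moment))
    rw [mean, ← sum_filter_ne_zero]
    refine sum_le_sum_of_subset_of_nonneg (fun ω hω => mem_filter.2 ⟨mem_univ ω, ?_⟩)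
      fun ω _ _ => (IsProbDist.prod hp).1 ω
    obtain ⟨hω, hω0⟩ := mem_filter.1 hω
    have q_pos (i : ι) : 0 < q i (ω i) :=
      hpq i _ (((hp i).1 _).lt_of_ne' (prod_ne_zero_iff.1 hω0 i (mem_univ i)))
    rw [entropyTypical, mem_compl, mem_filter_univ, Set.mem_Icc,
      ← Real.le_logb_iff_rpow_le one_lt_two (prod_pos fun i _ => q_pos i),
      ← Real.logb_le_iff_le_rpow one_lt_two (prod_pos fun i _ => q_pos i),
      Real.logb_prod _ _ fun i _ => (q_pos i).ne'] at hω
    by_contra! hlt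
    have := abs_lt.1 hlt
    exact hω ⟨by linarith, by linarith⟩
  have total := (IsProbDist.prod hp).2
  rw [← sum_add_sum_compl (entropyTypical q h c)] at total
  linarith

end ProductDistributions

/-! ### Entropy bounds -/

section Entropy

theorem neg_mul_logb_le {x : ℝ} (hx : 0 ≤ x) : -(x * Real.logb 2 x) ≤ Kconst / 2 := by
  rcases hx.eq_or_lt with rfl | hx
  · simp only [zero_mul, neg_zero, Kconst]
    have := Real.logb_nonneg one_lt_two (Real.one_le_exp zero_le_one)
    positivity
  have hlog : -(x * Real.log x) ≤ Real.exp (-1) := by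
    have h := Real.log_le_sub_one_of_pos (div_pos (Real.exp_pos (-1)) hx)
    rw [Real.log_div (Real.exp_pos _).ne' hx.ne', Real.log_exp] at h
    have := mul_le_mul_of_nonneg_left h hx.le
    rw [mul_sub, mul_sub, mul_div_cancel₀ _ hx.ne'] at this
    linarith
  have := div_le_div_of_nonneg_right hlog (Real.log_pos one_lt_two).le
  calc -(x * Real.logb 2 x) = -(x * Real.log x) / Real.log 2 := by rw [Real.logb]; ring
    _ ≤ _ := this
    _ = Kconst / 2 := by rw [Kconst, Real.logb, Real.log_exp, Real.exp_neg]; ring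

theorem mul_logb_nonpos {x : ℝ} (hx : 0 ≤ x) (hx1 : x ≤ 1) : x * Real.logb 2 x ≤ 0 :=
  mul_nonpos_of_nonneg_of_nonpos hx (Real.logb_nonpos one_lt_two hx hx1)

theorem mul_logb_sq_le {x : ℝ} (hx : 0 ≤ x) (hx1 : x ≤ 1) :
    x * Real.logb 2 x ^ 2 ≤ Kconst ^ 2 := by
  have hy := Real.sqrt_nonneg x
  have hlow := mul_logb_nonpos hy (Real.sqrt_le_one.2 hx1)
  have hup := neg_mul_logb_le hy
  calc x * Real.logb 2 x ^ 2 = (2 * -(√x * Real.logb 2 √x)) ^ 2 := by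
        rw [Real.logb, Real.logb, Real.log_sqrt hx, mul_pow, neg_sq, mul_pow, Real.sq_sqrt hx]
        ring
    _ ≤ Kconst ^ 2 := by gcongr <;> linarith

variable {Y : Type*} [Fintype Y] {p : Y → ℝ}

theorem IsProbDist.le_one (hp : IsProbDist p) (y : Y) : p y ≤ 1 :=
  hp.2 ▸ single_le_sum (fun z _ => hp.1 z) (mem_univ y)

theorem IsProbDist.sum_mul_logb_sq_le (hp : IsProbDist p) :
    ∑ y, p y * Real.logb 2 (p y) ^ 2 ≤ Fintype.card Y * Kconst ^ 2 := by
  simpa only [card_univ, nsmul_eq_mul] using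
    sum_le_card_nsmul univ _ _ fun y _ => mul_logb_sq_le (hp.1 y) (hp.le_one y)

theorem IsProbDist.shannonEntropy_nonneg (hp : IsProbDist p) : 0 ≤ shannonEntropy p :=
  neg_nonneg.2 (sum_nonpos fun y _ => mul_logb_nonpos (hp.1 y) (hp.le_one y))

theorem IsProbDist.shannonEntropy_le (hp : IsProbDist p) :
    shannonEntropy p ≤ Fintype.card Y * (Kconst / 2) := by
  rw [shannonEntropy, ← sum_neg_distrib]
  simpa only [card_univ, nsmul_eq_mul] using
    sum_le_card_nsmul univ _ _ fun y _ => neg_mul_logb_le (hp.1 y)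

end Entropy

/-! ### Spectral calculus and the Born rule -/

open scoped MatrixOrder

section Spectral

variable {ι : Type*} [Fintype ι] [DecidableEq ι]

/-- The functional calculus of an orthonormal basis: `ofEigen U r` is the Hermitian matrix whose
eigenvectors are the columns of the unitary `U`, with eigenvalues `r`. Spectral projections are
obtained for indicator functions `r`. -/
def ofEigen (U : unitaryGroup ι ℂ) : (ι → ℝ) →ₐ[ℝ] Matrix ι ι ℂ :=
  ((Unitary.conjStarAlgAut ℝ _ U : Matrix ι ι ℂ ≃⋆ₐ[ℝ] Matrix ι ι ℂ) :
    Matrix ι ι ℂ →ₐ[ℝ] Matrix ι ι ℂ).comp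
    ((diagonalAlgHom ℝ).comp (Complex.ofRealAm.compLeft ι))

/-- The distribution of the outcome when `ρ` is measured in the basis of columns of `U`. -/
def measDist (U : unitaryGroup ι ℂ) (ρ : Matrix ι ι ℂ) (j : ι) : ℝ :=
  ((star (U : Matrix ι ι ℂ) * ρ * U) j j).re

theorem ofEigen_apply (U : unitaryGroup ι ℂ) (r : ι → ℝ) :
    ofEigen U r = (U : Matrix ι ι ℂ) * diagonal (fun j => (r j : ℂ)) * star (U : Matrix ι ι ℂ) :=
  rfl

theorem exists_eq_ofEigen {A : Matrix ι ι ℂ} (hA : A.IsHermitian) :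
    ∃ U, A = ofEigen U hA.eigenvalues :=
  ⟨hA.eigenvectorUnitary, hA.spectral_theorem⟩

theorem ofEigen_nonneg (U : unitaryGroup ι ℂ) {r : ι → ℝ} (hr : 0 ≤ r) : 0 ≤ ofEigen U r :=
  star_right_conjugate_nonneg (nonneg_iff_posSemidef.2 <| .diagonal fun j =>
    Complex.zero_le_real.2 (hr j)) _

theorem ofEigen_mono (U : unitaryGroup ι ℂ) : Monotone (ofEigen U) := fun r s hrs => by
  rw [← sub_nonneg, ← map_sub]
  exact ofEigen_nonneg U (sub_nonneg.2 hrs)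

theorem isSelfAdjoint_ofEigen (U : unitaryGroup ι ℂ) (r : ι → ℝ) :
    IsSelfAdjoint (ofEigen U r) :=
  IsSelfAdjoint.conjugate (isHermitian_diagonal_of_self_adjoint _ <|
    funext fun j => Complex.conj_ofReal (r j)) _

theorem trace_ofEigen (U : unitaryGroup ι ℂ) (r : ι → ℝ) :
    (ofEigen U r).trace.re = ∑ j, r j := by
  rw [ofEigen_apply, trace_mul_cycle, Unitary.coe_star_mul_self, one_mul, trace_diagonal,
    Complex.re_sum]
  rfl

theorem measDist_ofEigen (U : unitaryGroup ι ℂ) (r : ι → ℝ) : measDist U (ofEigen U r) = r := by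
  ext j
  rw [measDist, ofEigen_apply, ← mul_assoc, ← mul_assoc, Unitary.coe_star_mul_self, one_mul,
    mul_assoc, Unitary.coe_star_mul_self, mul_one, diagonal_apply_eq, Complex.ofReal_re]

theorem measDist_mono (U : unitaryGroup ι ℂ) : Monotone (measDist U) := fun ρ σ h j => by
  have := (le_iff.1 (star_left_conjugate_le_conjugate h (U : Matrix ι ι ℂ))).diag_nonneg (i := j)
  rw [Matrix.sub_apply] at this
  exact (Complex.le_def.1 (sub_nonneg.1 this)).1

theorem re_trace_mul_ofEigen (U : unitaryGroup ι ℂ) (ρ : Matrix ι ι ℂ) (r : ι → ℝ) :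
    (ρ * ofEigen U r).trace.re = ∑ j, r j * measDist U ρ j := by
  rw [ofEigen_apply, ← mul_assoc, trace_mul_comm, ← mul_assoc, ← mul_assoc, trace_mul_comm,
    trace, Complex.re_sum]
  simp only [diag_apply, diagonal_mul, Complex.re_ofReal_mul, measDist]

theorem sum_measDist (U : unitaryGroup ι ℂ) (ρ : Matrix ι ι ℂ) :
    ∑ j, measDist U ρ j = ρ.trace.re := by
  simpa only [map_one, mul_one, Pi.one_apply, one_mul] using
    (re_trace_mul_ofEigen U ρ 1).symm

theorem measDist_zero (U : unitaryGroup ι ℂ) : measDist U 0 = 0 := by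
  simpa only [map_zero] using measDist_ofEigen U 0

theorem nonneg_of_ofEigen_nonneg {U : unitaryGroup ι ℂ} {r : ι → ℝ} (h : 0 ≤ ofEigen U r) :
    0 ≤ r := by
  simpa only [measDist_ofEigen, measDist_zero] using measDist_mono U h

end Spectral

section Trace

variable {ι : Type*} [Fintype ι]

theorem re_trace_mul_le_left {ρ σ T : Matrix ι ι ℂ} (h : ρ ≤ σ) (hT : 0 ≤ T) :
    (ρ * T).trace.re ≤ (σ * T).trace.re := by
  obtain ⟨U, hU⟩ := exists_eq_ofEigen (nonneg_iff_posSemidef.1 hT).isHermitian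
  rw [hU, re_trace_mul_ofEigen, re_trace_mul_ofEigen]
  exact sum_le_sum fun j _ => mul_le_mul_of_nonneg_left (measDist_mono U h j)
    ((nonneg_iff_posSemidef.1 hT).eigenvalues_nonneg j)

theorem re_trace_mul_le_right {ρ S T : Matrix ι ι ℂ} (hρ : 0 ≤ ρ) (h : S ≤ T) :
    (ρ * S).trace.re ≤ (ρ * T).trace.re := by
  rw [trace_mul_comm ρ S, trace_mul_comm ρ T]
  exact re_trace_mul_le_left h hρ

variable [DecidableEq ι]

theorem re_trace_mul_le {ρ T : Matrix ι ι ℂ} (hρ : 0 ≤ ρ) (hT : T ≤ 1) :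
    (ρ * T).trace.re ≤ ρ.trace.re := by
  simpa only [mul_one] using re_trace_mul_le_right hρ hT

theorem IsState.nonneg {ρ : Matrix ι ι ℂ} (hρ : IsState ρ) : 0 ≤ ρ :=
  nonneg_iff_posSemidef.2 hρ.1

theorem IsState.isProbDist_measDist {ρ : Matrix ι ι ℂ} (hρ : IsState ρ) (U : unitaryGroup ι ℂ) :
    IsProbDist (measDist U ρ) := by
  refine ⟨fun j => ?_, by rw [sum_measDist, hρ.2, Complex.one_re]⟩
  exact (congrFun (measDist_zero U) j).ge.trans (measDist_mono U hρ.nonneg j)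

theorem IsState.le_one {ρ : Matrix ι ι ℂ} (hρ : IsState ρ) : ρ ≤ 1 := by
  obtain ⟨U, hU⟩ := exists_eq_ofEigen hρ.1.isHermitian
  generalize hρ.1.isHermitian.eigenvalues = r at hU
  have hr := hρ.isProbDist_measDist U
  rw [hU, measDist_ofEigen] at hr
  rw [hU, ← map_one (ofEigen U)]
  exact ofEigen_mono U hr.le_one

theorem exists_sqrt_one_sub {B : Matrix ι ι ℂ} (hB : 0 ≤ B) (hB1 : B ≤ 1) :
    ∃ S, IsSelfAdjoint S ∧ S * S = 1 - B ∧ (1 - S) * (1 - S) ≤ B := by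
  obtain ⟨U, hU⟩ := exists_eq_ofEigen (nonneg_iff_posSemidef.1 hB).isHermitian
  generalize (nonneg_iff_posSemidef.1 hB).isHermitian.eigenvalues = b at hU
  subst hU
  have hb : 0 ≤ b := nonneg_of_ofEigen_nonneg hB
  have hb1 : 0 ≤ 1 - b := nonneg_of_ofEigen_nonneg (U := U) <| by
    rwa [map_sub, map_one, sub_nonneg]
  let s : ι → ℝ := fun j => √(1 - b j)
  have sq_s (j : ι) : s j * s j = 1 - b j := Real.mul_self_sqrt (hb1 j)
  refine ⟨ofEigen U s, isSelfAdjoint_ofEigen U s, ?_, ?_⟩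
  · rw [← map_mul, ← map_one (ofEigen U), ← map_sub]
    exact congrArg _ (funext sq_s)
  · rw [← map_one (ofEigen U), ← map_sub, ← map_mul]
    refine ofEigen_mono U fun j => ?_
    have hs1 : s j ≤ 1 := Real.sqrt_le_one.2 (sub_le_self 1 (hb j))
    simp only [Pi.mul_apply, Pi.sub_apply, Pi.one_apply]
    nlinarith [sq_s j, Real.sqrt_nonneg (1 - b j)]

end Trace

/-! ### One-shot coding bounds -/

theorem add_conjugate_le {R : Type*} [Ring R] [StarRing R] [PartialOrder R] [StarOrderedRing R]
    [Algebra ℝ R] [StarModule ℝ R] [IsOrderedModule ℝ R] {p : R} (hp : 0 ≤ p) (a b : R) {t : ℝ}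
    (ht : 0 < t) :
    (a + b) * p * star (a + b) ≤
      (1 + t) • (a * p * star a) + (1 + t⁻¹) • (b * p * star b) := by
  have h := smul_nonneg (inv_nonneg.2 ht.le) (star_right_conjugate_nonneg hp (t • a - b))
  have expand : t⁻¹ • ((t • a - b) * p * star (t • a - b)) =
      t • (a * p * star a) - a * p * star b - b * p * star a + t⁻¹ • (b * p * star b) := by
    simp only [star_sub, star_smul, star_trivial, sub_mul, mul_sub, smul_mul_assoc,
      mul_smul_comm, smul_sub, smul_smul, inv_mul_cancel₀ ht.ne', inv_mul_cancel_left₀ ht.ne',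
      one_smul, mul_assoc]
    abel
  rw [← sub_nonneg]
  refine h.trans_eq (expand.trans ?_)
  simp only [star_add, add_mul, mul_add, add_smul, one_smul]
  abel

section OneShot

variable {ι : Type*} [Fintype ι] [DecidableEq ι]

theorem re_trace_mul_le_of_truncation {σ σ' T : Matrix ι ι ℂ} {θ ε : ℝ} (hle : σ' ≤ σ)
    (hθ : σ' ≤ θ • 1) (hε : (σ - σ').trace.re ≤ ε) (hT : 0 ≤ T) (hT1 : T ≤ 1) :
    (σ * T).trace.re ≤ ε + θ * T.trace.re := by
  have discarded := (re_trace_mul_le (sub_nonneg.2 hle) hT1).trans hε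
  have kept := re_trace_mul_le_left hθ hT
  rw [sub_mul, trace_sub, Complex.sub_re] at discarded
  rw [smul_mul_assoc, one_mul, trace_smul, Complex.smul_re, smul_eq_mul] at kept
  linarith

theorem re_trace_mul_le_of_projection {ρ ρ' σ Q T : Matrix ι ι ℂ} {τ θ ε : ℝ} (hρ' : 0 ≤ ρ')
    (hle : ρ' ≤ ρ) (hτ0 : 0 ≤ τ) (hτ : ρ' ≤ τ • 1) (hε : (ρ - ρ').trace.re ≤ ε)
    (hQ : IsStarProjection Q) (hθ : 0 < θ) (hQσ : θ • Q ≤ σ) (hQρ : (ρ * (1 - Q)).trace.re ≤ ε)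
    (hT : 0 ≤ T) (hT1 : T ≤ 1) :
    (ρ * T).trace.re ≤ 3 * ε + 2 * (τ / θ) * (σ * T).trace.re := by
  have discarded := (re_trace_mul_le (sub_nonneg.2 hle) hT1).trans hε
  rw [sub_mul, trace_sub, Complex.sub_re] at discarded
  have inside : Q * ρ' * star Q ≤ (τ / θ) • σ :=
    calc Q * ρ' * star Q ≤ Q * (τ • 1) * star Q := star_right_conjugate_le_conjugate hτ Q
      _ = (τ / θ) • (θ • Q) := by
          rw [hQ.isSelfAdjoint.star_eq, mul_smul_comm, mul_one, smul_mul_assoc,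
            hQ.isIdempotentElem.eq, smul_smul, div_mul_cancel₀ _ hθ.ne']
      _ ≤ (τ / θ) • σ := smul_le_smul_of_nonneg_left hQσ (by positivity)
  have outside : ((1 - Q) * ρ' * star (1 - Q) * T).trace.re ≤ ε :=
    calc _ ≤ ((1 - Q) * ρ' * star (1 - Q)).trace.re :=
          re_trace_mul_le (star_right_conjugate_nonneg hρ' _) hT1
      _ = (ρ' * (1 - Q)).trace.re := by
          rw [hQ.one_sub.isSelfAdjoint.star_eq, trace_mul_cycle, hQ.one_sub.isIdempotentElem.eq,
            trace_mul_comm]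
      _ ≤ ε := (re_trace_mul_le_left hle hQ.one_sub_nonneg).trans hQρ
  have split := add_conjugate_le hρ' Q (1 - Q) one_pos
  rw [add_sub_cancel, one_mul, star_one, mul_one, inv_one, one_add_one_eq_two] at split
  have split := re_trace_mul_le_left split hT
  have inside := re_trace_mul_le_left inside hT
  simp only [add_mul, smul_mul_assoc, trace_add, trace_smul, Complex.add_re, Complex.smul_re,
    smul_eq_mul] at split inside
  linarith

/-- A partially built code of size `k` for the channel `ρ`: the decoding operators have trace at
most `R` and recognise their letters with probability at least `1 - lam`. They need only sum to
something below the identity, which leaves room to enlarge the code. -/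
structure IsPartialCode {Y : Type*} (ρ : Y → Matrix ι ι ℂ) (lam R : ℝ) {k : ℕ} (f : Fin k → Y)
    (D : Fin k → Matrix ι ι ℂ) : Prop where
  nonneg : ∀ m, 0 ≤ D m
  decodes : ∀ m, 1 - lam ≤ (ρ (f m) * D m).trace.re
  trace_le : ∀ m, (D m).trace.re ≤ R
  sum_le_one : ∑ m, D m ≤ 1

namespace IsPartialCode

variable {Y : Type*} {ρ : Y → Matrix ι ι ℂ} {lam R : ℝ} {k : ℕ} {f : Fin k → Y}
  {D : Fin k → Matrix ι ι ℂ}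

theorem empty (f : Fin 0 → Y) (D : Fin 0 → Matrix ι ι ℂ) : IsPartialCode ρ lam R f D where
  nonneg m := m.elim0
  decodes m := m.elim0
  trace_le m := m.elim0
  sum_le_one := by simp [(IsStarProjection.one (Matrix ι ι ℂ)).nonneg]

theorem re_trace_sum_le (hD : IsPartialCode ρ lam R f D) : (∑ m, D m).trace.re ≤ k * R := by
  rw [trace_sum, Complex.re_sum]
  simpa using sum_le_card_nsmul univ _ R fun m _ => hD.trace_le m

theorem mul_one_sub_le (hρ : ∀ y, IsState (ρ y)) (hD : IsPartialCode ρ lam R f D) :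
    k * (1 - lam) ≤ Fintype.card ι := by
  have total := re_trace_mul_le (IsStarProjection.one (Matrix ι ι ℂ)).nonneg hD.sum_le_one
  rw [one_mul, trace_sum, Complex.re_sum, trace_one, Complex.natCast_re] at total
  have each (m : Fin k) : 1 - lam ≤ (D m).trace.re := by
    simpa only [one_mul] using
      (hD.decodes m).trans (re_trace_mul_le_left (hρ (f m)).le_one (hD.nonneg m))
  calc k * (1 - lam) = ∑ _m : Fin k, (1 - lam) := by
        rw [sum_const, card_univ, Fintype.card_fin, nsmul_eq_mul]
    _ ≤ ∑ m, (D m).trace.re := sum_le_sum fun m _ => each m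
    _ ≤ Fintype.card ι := total

theorem exists_maximal (hlam : lam < 1) (hρ : ∀ y, IsState (ρ y)) :
    ∃ (k : ℕ) (f : Fin k → Y) (D : Fin k → Matrix ι ι ℂ), IsPartialCode ρ lam R f D ∧
      ∀ (f' : Fin (k + 1) → Y) (D' : Fin (k + 1) → Matrix ι ι ℂ),
        ¬ IsPartialCode ρ lam R f' D' := by
  let sizes := {k | ∃ (f : Fin k → Y) (D : Fin k → Matrix ι ι ℂ), IsPartialCode ρ lam R f D}
  have bounded : BddAbove sizes := by
    refine ⟨⌊Fintype.card ι / (1 - lam)⌋₊, ?_⟩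
    rintro k ⟨f, D, hD⟩
    exact Nat.le_floor ((le_div_iff₀ (sub_pos.2 hlam)).2 (hD.mul_one_sub_le hρ))
  have attained : sSup sizes ∈ sizes :=
    Nat.sSup_mem ⟨0, Fin.elim0, Fin.elim0, empty _ _⟩ bounded
  obtain ⟨f, D, hD⟩ := attained
  exact ⟨_, f, D, hD, fun f' D' hD' => Nat.not_succ_le_self _ (le_csSup bounded ⟨f', D', hD'⟩)⟩

theorem cons (hD : IsPartialCode ρ lam R f D) {S E : Matrix ι ι ℂ} (hS : IsSelfAdjoint S)
    (hSD : S * S = 1 - ∑ m, D m) (hE : 0 ≤ E) (hE1 : E ≤ 1) (hER : E.trace.re ≤ R)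
    {y : Y} (hy : 1 - lam ≤ (ρ y * (S * E * S)).trace.re) :
    IsPartialCode ρ lam R (Fin.cons y f : Fin (k + 1) → Y) (Fin.cons (S * E * S) D) where
  nonneg := Fin.cases (hS.conjugate_nonneg hE) hD.nonneg
  decodes := Fin.cases hy hD.decodes
  trace_le := by
    refine Fin.cases ?_ hD.trace_le
    calc (S * E * S).trace.re = (E * (S * S)).trace.re := by rw [trace_mul_cycle, trace_mul_comm]
      _ ≤ E.trace.re := re_trace_mul_le hE (hSD ▸ sub_le_self 1 (sum_nonneg fun m _ => hD.nonneg m))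
      _ ≤ R := hER
  sum_le_one := by
    have h := hS.conjugate_le_conjugate hE1
    rw [mul_one, hSD] at h
    rw [Fin.sum_cons]
    exact le_sub_iff_add_le.1 h

-- Since the code cannot be enlarged, its decoding operators must catch part of every effect `E`.
theorem re_trace_mul_le_of_maximal (hD : IsPartialCode ρ lam R f D)
    (hmax : ∀ (f' : Fin (k + 1) → Y) D', ¬ IsPartialCode ρ lam R f' D') {y : Y} (hρ : 0 ≤ ρ y)
    {E : Matrix ι ι ℂ} (hE : 0 ≤ E) (hE1 : E ≤ 1) (hER : E.trace.re ≤ R) {t : ℝ} (ht : 0 < t) :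
    (ρ y * E).trace.re ≤ (1 + t) * (1 - lam) + (1 + t⁻¹) * (ρ y * ∑ m, D m).trace.re := by
  obtain ⟨S, hS, hSD, hSB⟩ :=
    exists_sqrt_one_sub (sum_nonneg fun m _ => hD.nonneg m) hD.sum_le_one
  have not_decoded : (ρ y * (S * E * S)).trace.re ≤ 1 - lam := by
    by_contra! h
    exact hmax _ _ (hD.cons hS hSD hE hE1 hER h.le)
  have hS' := (IsSelfAdjoint.one _).sub hS
  have caught : (1 - S) * E * (1 - S) ≤ ∑ m, D m :=
    (hS'.conjugate_le_conjugate hE1).trans (by rwa [mul_one])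
  have split := add_conjugate_le hE S (1 - S) ht
  rw [hS'.star_eq, hS.star_eq, add_sub_cancel, star_one, one_mul, mul_one] at split
  have split := re_trace_mul_le_right hρ split
  rw [mul_add, mul_smul_comm, mul_smul_comm, trace_add, trace_smul, trace_smul, Complex.add_re,
    Complex.smul_re, Complex.smul_re, smul_eq_mul, smul_eq_mul] at split
  have caught := re_trace_mul_le_right hρ caught
  refine split.trans (add_le_add ?_ ?_) <;> gcongr

end IsPartialCode

theorem exists_isPartialCode {Y : Type*} [Fintype Y] {ρ : Y → Matrix ι ι ℂ}
    (hρ : ∀ y, IsState (ρ y)) {p : Y → ℝ} (hp : IsProbDist p) {E : Y → Matrix ι ι ℂ} {R : ℝ}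
    (hE : ∀ y, 0 ≤ E y) (hE1 : ∀ y, E y ≤ 1) (hER : ∀ y, (E y).trace.re ≤ R) {σ' : Matrix ι ι ℂ}
    {θ ε lam : ℝ} (hlam : lam ∈ Set.Ioo 0 1) (hε : ε ≤ lam ^ 2 / 16) (hθ : 0 ≤ θ)
    (hEρ : 1 - ε ≤ ∑ y, p y * (ρ y * E y).trace.re) (hσ' : σ' ≤ ∑ y, p y • ρ y)
    (hσθ : σ' ≤ θ • 1) (hσε : (∑ y, p y • ρ y - σ').trace.re ≤ ε) :
    ∃ (k : ℕ) (f : Fin k → Y) (D : Fin k → Matrix ι ι ℂ),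
      IsPartialCode ρ lam R f D ∧ ε ≤ θ * (k * R) := by
  obtain ⟨k, f, D, hD, hmax⟩ := IsPartialCode.exists_maximal (R := R) hlam.2 hρ
  refine ⟨k, f, D, hD, ?_⟩
  have hl0 := hlam.1
  have average := hEρ.trans <| sum_le_sum fun y _ => mul_le_mul_of_nonneg_left
    (hD.re_trace_mul_le_of_maximal hmax (hρ y).nonneg (hE y) (hE1 y) (hER y) (half_pos hl0))
    (hp.1 y)
  have covered := (re_trace_mul_le_of_truncation hσ' hσθ hσε (sum_nonneg fun m _ => hD.nonneg m)
    hD.sum_le_one).trans (add_le_add_right (mul_le_mul_of_nonneg_left hD.re_trace_sum_le hθ) ε)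
  rw [sum_mul] at covered
  simp only [trace_sum, Complex.re_sum, smul_mul_assoc, trace_smul, Complex.smul_re,
    smul_eq_mul] at covered
  simp only [mul_add, sum_add_distrib, mul_left_comm (p _) (1 + _), ← mul_sum, ← sum_mul, hp.2,
    one_mul] at average
  have gap : 1 - ε - (1 + lam / 2) * (1 - lam) ≤ (1 + (lam / 2)⁻¹) * (ε + θ * (k * R)) :=
    sub_le_iff_le_add'.2 (average.trans (by gcongr))
  have caught : (lam + 2) * (2 * ε) ≤ (lam + 2) * (ε + θ * (k * R)) :=
    calc (lam + 2) * (2 * ε) ≤ lam * (1 - ε - (1 + lam / 2) * (1 - lam)) := by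
          have := mul_le_mul_of_nonneg_left hε (show 0 ≤ 3 * lam + 4 by positivity)
          nlinarith [pow_pos hl0 2, pow_pos hl0 3, hlam.2]
      _ ≤ lam * ((1 + (lam / 2)⁻¹) * (ε + θ * (k * R))) := mul_le_mul_of_nonneg_left gap hl0.le
      _ = (lam + 2) * (ε + θ * (k * R)) := by field_simp
  linarith [le_of_mul_le_mul_left caught (by positivity)]

end OneShot

/-! ### Spectral projections and truncations -/

section Truncation

variable {ι : Type*} [Fintype ι] [DecidableEq ι]

/-- The projection onto the span of the columns of `U` with index in `A`. -/
def spectralProj (U : unitaryGroup ι ℂ) (A : Finset ι) : Matrix ι ι ℂ :=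
  ofEigen U (Set.indicator A 1)

theorem isStarProjection_spectralProj (U : unitaryGroup ι ℂ) (A : Finset ι) :
    IsStarProjection (spectralProj U A) where
  isIdempotentElem := by
    rw [IsIdempotentElem, spectralProj, ← map_mul]
    refine congrArg _ (funext fun j => ?_)
    by_cases hj : j ∈ A <;> simp [hj]
  isSelfAdjoint := isSelfAdjoint_ofEigen U _

theorem re_trace_mul_spectralProj (U : unitaryGroup ι ℂ) (ρ : Matrix ι ι ℂ) (A : Finset ι) :
    (ρ * spectralProj U A).trace.re = ∑ j ∈ A, measDist U ρ j := by
  rw [spectralProj, re_trace_mul_ofEigen, ← sum_indicator_subset _ (subset_univ A)]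
  exact sum_congr rfl fun j _ => by
    rw [← Set.indicator_mul_left]
    simp only [Pi.one_apply, one_mul]

theorem re_trace_spectralProj (U : unitaryGroup ι ℂ) (A : Finset ι) :
    (spectralProj U A).trace.re = #A := by
  rw [spectralProj, trace_ofEigen, sum_indicator_subset _ (subset_univ A)]
  simp only [Pi.one_apply, sum_const, nsmul_eq_mul, mul_one]

theorem smul_one_eq_ofEigen (U : unitaryGroup ι ℂ) (τ : ℝ) :
    τ • (1 : Matrix ι ι ℂ) = ofEigen U fun _ => τ := by
  rw [← map_one (ofEigen U), ← map_smul]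
  exact congrArg _ (funext fun _ => mul_one τ)

theorem smul_spectralProj_le {U : unitaryGroup ι ℂ} {r : ι → ℝ} (hr : 0 ≤ r) {A : Finset ι} {θ : ℝ}
    (hθ : ∀ j ∈ A, θ ≤ r j) : θ • spectralProj U A ≤ ofEigen U r := by
  rw [spectralProj, ← map_smul]
  refine ofEigen_mono U fun j => ?_
  by_cases hj : j ∈ A
  · simpa [hj] using hθ j hj
  · simpa [hj] using hr j

theorem exists_truncation {U : unitaryGroup ι ℂ} {r : ι → ℝ} (hr : IsProbDist r) {A : Finset ι}
    {τ ε : ℝ} (hτ0 : 0 ≤ τ) (hτ : ∀ j ∈ A, r j ≤ τ) (hA : 1 - ε ≤ ∑ j ∈ A, r j) :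
    ∃ ρ', 0 ≤ ρ' ∧ ρ' ≤ ofEigen U r ∧ ρ' ≤ τ • 1 ∧ (ofEigen U r - ρ').trace.re ≤ ε := by
  refine ⟨ofEigen U (Set.indicator A r), ofEigen_nonneg U ?_, ofEigen_mono U ?_, ?_, ?_⟩
  · exact fun j => Set.indicator_nonneg (fun j _ => hr.1 j) j
  · exact Set.indicator_le_self' fun j _ => hr.1 j
  · rw [smul_one_eq_ofEigen U]
    exact ofEigen_mono U (Set.indicator_le' hτ fun _ _ => hτ0)
  · rw [trace_sub, Complex.sub_re, trace_ofEigen, trace_ofEigen, hr.2,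
      sum_indicator_subset _ (subset_univ A)]
    linarith

end Truncation

/-! ### Tensor powers -/

section TensorPower

variable {d n : ℕ}

theorem tensorPow_mul (A B : Fin n → Mat d) :
    tensorPow A * tensorPow B = tensorPow fun i => A i * B i := by
  ext j k
  simp only [tensorPow, Matrix.mul_apply, Matrix.of_apply, ← prod_mul_distrib]
  rw [prod_univ_sum, Fintype.piFinset_univ]

theorem star_tensorPow (A : Fin n → Mat d) :
    star (tensorPow A) = tensorPow fun i => star (A i) := by
  ext j k
  simp only [tensorPow, Matrix.star_apply, Matrix.of_apply, star_prod]

theorem tensorPow_diagonal (r : Fin n → Fin d → ℂ) :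
    tensorPow (fun i => diagonal (r i)) = diagonal fun j => ∏ i, r i (j i) := by
  ext j k
  simp only [tensorPow, Matrix.of_apply, diagonal_apply, prod_ite_zero, mem_univ, true_implies,
    funext_iff]

theorem tensorPow_one : tensorPow (fun _ : Fin n => (1 : Mat d)) = 1 := by
  have h := tensorPow_diagonal (d := d) fun (_ : Fin n) _ => (1 : ℂ)
  simp only [prod_const_one] at h
  exact h

/-- The tensor product of a family of unitaries. -/
def tensorUnitary (U : Fin n → unitaryGroup (Fin d) ℂ) : unitaryGroup (Fin n → Fin d) ℂ :=
  ⟨tensorPow fun i => U i, by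
    rw [mem_unitaryGroup_iff, star_tensorPow, tensorPow_mul]
    simp only [mem_unitaryGroup_iff.1 (U _).2, tensorPow_one]⟩

theorem tensorPow_ofEigen (U : Fin n → unitaryGroup (Fin d) ℂ) (r : Fin n → Fin d → ℝ) :
    tensorPow (fun i => ofEigen (U i) (r i)) =
      ofEigen (tensorUnitary U) fun j => ∏ i, r i (j i) := by
  simp only [ofEigen_apply, Complex.ofReal_prod]
  rw [← tensorPow_diagonal fun i j => (r i j : ℂ), tensorUnitary, star_tensorPow, tensorPow_mul,
    tensorPow_mul]

theorem measDist_tensorPow (U : Fin n → unitaryGroup (Fin d) ℂ) {A : Fin n → Mat d}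
    (hA : ∀ i, (A i).IsHermitian) (j : Fin n → Fin d) :
    measDist (tensorUnitary U) (tensorPow A) j = ∏ i, measDist (U i) (A i) (j i) := by
  have real_diag (i : Fin n) : (measDist (U i) (A i) (j i) : ℂ) =
      (star (U i : Mat d) * A i * U i) (j i) (j i) :=
    (isHermitian_conjTranspose_mul_mul (U i : Mat d) (hA i)).coe_re_apply_self (j i)
  rw [measDist, tensorUnitary, star_tensorPow, tensorPow_mul, tensorPow_mul, tensorPow,
    Matrix.of_apply]
  simp only [← real_diag, ← Complex.ofReal_prod, Complex.ofReal_re]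

theorem isState_ofEigen {ι : Type*} [Fintype ι] [DecidableEq ι] (U : unitaryGroup ι ℂ) {r : ι → ℝ}
    (hr : IsProbDist r) : IsState (ofEigen U r) := by
  have hpos := nonneg_iff_posSemidef.1 (ofEigen_nonneg U hr.1)
  refine ⟨hpos, Complex.ext ?_ ?_⟩
  · rw [trace_ofEigen, hr.2, Complex.one_re]
  · exact (Complex.le_def.1 hpos.trace_nonneg).2.symm

theorem IsState.exists_eq_ofEigen {ρ : Mat d} (hρ : IsState ρ) :
    ∃ U r, ρ = ofEigen U r ∧ IsProbDist r ∧ vnEntropy ρ = shannonEntropy r := by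
  obtain ⟨U, hU⟩ := _root_.exists_eq_ofEigen hρ.1.isHermitian
  refine ⟨U, _, hU, ?_, by rw [vnEntropy, dif_pos hρ.1.isHermitian, shannonEntropy]⟩
  have h := hρ.isProbDist_measDist U
  rwa [congrArg (measDist U) hU, measDist_ofEigen] at h

theorem IsState.tensorPow {ρ : Fin n → Mat d} (hρ : ∀ i, IsState (ρ i)) :
    IsState (tensorPow ρ) := by
  choose U r hU hr _ using fun i => (hρ i).exists_eq_ofEigen
  rw [funext hU, tensorPow_ofEigen]
  exact isState_ofEigen _ (.prod hr)

variable {X : Type*} [Fintype X]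

theorem tensorPow_avgState (P : X → ℝ) (W : X → Mat d) :
    tensorPow (fun _ : Fin n => avgState P W) =
      ∑ xs : Fin n → X, (∏ i, P (xs i)) • tensorPow fun i => W (xs i) := by
  ext j k
  simp only [tensorPow, avgState, Matrix.sum_apply, Matrix.smul_apply, Matrix.of_apply,
    Complex.real_smul, Complex.ofReal_prod, smul_eq_mul, ← prod_mul_distrib]
  rw [prod_univ_sum, Fintype.piFinset_univ]

theorem isState_avgState {P : X → ℝ} (hP : IsProbDist P) {W : X → Mat d}
    (hW : ∀ x, IsState (W x)) : IsState (avgState P W) := by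
  refine ⟨posSemidef_sum _ fun x _ => (hW x).1.smul (Complex.zero_le_real.2 (hP.1 x)), ?_⟩
  rw [avgState, trace_sum]
  simp only [trace_smul, (hW _).2, smul_eq_mul, mul_one]
  exact_mod_cast hP.2

theorem measDist_avgState (V : unitaryGroup (Fin d) ℂ) (P : X → ℝ) (W : X → Mat d) (j : Fin d) :
    measDist V (avgState P W) j = ∑ x, P x * measDist V (W x) j := by
  simp only [measDist, avgState, mul_sum, sum_mul, mul_smul_comm, smul_mul_assoc,
    Matrix.sum_apply, Matrix.smul_apply, smul_eq_mul, Complex.re_sum, Complex.re_ofReal_mul]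

end TensorPower

/-! ### Typicality for independent pairs -/

section Typicality

variable {X Y : Type*} [Fintype X] [Fintype Y]

theorem card_entropyTypical_le {ι : Type*} [Fintype ι] [DecidableEq ι] {q : ι → Y → ℝ}
    (hq : ∀ i, IsProbDist (q i)) (h c : ℝ) :
    (#(entropyTypical q h c) : ℝ) ≤ 2 ^ (h + c) := by
  have mass : #(entropyTypical q h c) • (2 : ℝ) ^ (-h - c) ≤ 1 :=
    calc _ ≤ ∑ ω ∈ entropyTypical q h c, ∏ i, q i (ω i) :=
          card_nsmul_le_sum _ _ _ fun ω hω => (mem_filter.1 hω).2.1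
      _ ≤ ∑ ω : ι → Y, ∏ i, q i (ω i) :=
          sum_le_univ_sum_of_nonneg fun ω => (IsProbDist.prod hq).1 ω
      _ = 1 := (IsProbDist.prod hq).2
  rwa [nsmul_eq_mul, ← neg_add', Real.rpow_neg zero_le_two, ← div_eq_mul_inv,
    div_le_one (by positivity)] at mass

theorem IsProbDist.joint {P : X → ℝ} (hP : IsProbDist P) {r : X → Y → ℝ}
    (hr : ∀ x, IsProbDist (r x)) : IsProbDist fun z : X × Y => P z.1 * r z.1 z.2 := by
  refine ⟨fun z => mul_nonneg (hP.1 _) ((hr _).1 _), ?_⟩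
  simp only [Fintype.sum_prod_type, ← mul_sum, (hr _).2, mul_one, hP.2]

theorem one_sub_le_sum_mul_sum_entropyTypical {n : ℕ} {P : X → ℝ} (hP : IsProbDist P)
    {r : X → Y → ℝ} (hr : ∀ x, IsProbDist (r x)) {c ε : ℝ} (hc : 0 < c)
    (hε : n * (Fintype.card Y * Kconst ^ 2) ≤ ε * c ^ 2) :
    1 - ε ≤ ∑ xs : Fin n → X, (∏ i, P (xs i)) *
      ∑ ys ∈ entropyTypical (fun i => r (xs i)) (n * ∑ x, P x * shannonEntropy (r x)) c,
        ∏ i, r (xs i) (ys i) := by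
  have mean : ∑ _i : Fin n, ∑ z : X × Y, P z.1 * r z.1 z.2 * Real.logb 2 (r z.1 z.2) =
      -(n * ∑ x, P x * shannonEntropy (r x)) := by
    simp only [sum_const, card_univ, Fintype.card_fin, nsmul_eq_mul, Fintype.sum_prod_type,
      mul_assoc, ← mul_sum, shannonEntropy, mul_neg, sum_neg_distrib, neg_neg]
  have moment : ∑ _i : Fin n, ∑ z : X × Y, P z.1 * r z.1 z.2 * Real.logb 2 (r z.1 z.2) ^ 2 ≤
      ε * c ^ 2 := by
    refine le_trans ?_ hε
    simp only [sum_const, card_univ, Fintype.card_fin, nsmul_eq_mul, Fintype.sum_prod_type,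
      mul_assoc, ← mul_sum]
    gcongr
    calc _ ≤ ∑ x, P x * (Fintype.card Y * Kconst ^ 2) :=
          sum_le_sum fun x _ => mul_le_mul_of_nonneg_left (hr x).sum_mul_logb_sq_le (hP.1 x)
      _ = _ := by rw [← sum_mul, hP.2, one_mul]
  refine (one_sub_le_sum_entropyTypical (Ω := fun _ => X × Y) (p := fun _ z => P z.1 * r z.1 z.2)
    (q := fun _ z => r z.1 z.2) (fun _ => hP.joint hr)
    (fun _ z hz => pos_of_mul_pos_right hz (hP.1 z.1)) hc mean moment).trans_eq ?_
  simp only [entropyTypical, sum_filter, mul_sum, prod_mul_distrib, mul_ite, mul_zero]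
  rw [← Fintype.sum_prod_type']
  exact Fintype.sum_equiv (Equiv.arrowProdEquivProdArrow (Fin n) _ _) _ _ fun _ => rfl

end Typicality

/-! ### The direct part -/

section Direct

variable {d n : ℕ}

theorem exists_truncation_tensorPow {ρ : Fin n → Mat d} (hρ : ∀ i, IsState (ρ i)) {c ε : ℝ}
    (hc : 0 < c) (hε : n * (d * Kconst ^ 2) ≤ ε * c ^ 2) :
    ∃ ρ', 0 ≤ ρ' ∧ ρ' ≤ tensorPow ρ ∧ ρ' ≤ (2 : ℝ) ^ (-∑ i, vnEntropy (ρ i) + c) • 1 ∧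
      (tensorPow ρ - ρ').trace.re ≤ ε := by
  choose U r hU hr hH using fun i => (hρ i).exists_eq_ofEigen
  simp only [hH]
  rw [funext hU, tensorPow_ofEigen]
  refine exists_truncation (.prod hr) (A := entropyTypical r (∑ i, shannonEntropy (r i)) c)
    (by positivity) (fun j hj => (mem_filter.1 hj).2.2)
    (one_sub_le_sum_entropyTypical hr (fun _ _ => id) hc ?_ (le_trans ?_ hε))
  · simp only [shannonEntropy, sum_neg_distrib, neg_neg]
  · simpa only [card_univ, Fintype.card_fin, nsmul_eq_mul] using
      sum_le_card_nsmul univ _ _ fun i _ => (hr i).sum_mul_logb_sq_le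

variable {X : Type*} [Fintype X] {W : X → Mat d} {P : X → ℝ}

theorem exists_typical_effects (hW : ∀ x, IsState (W x)) (hP : IsProbDist P) {c ε : ℝ}
    (hc : 0 < c) (hε : n * (d * Kconst ^ 2) ≤ ε * c ^ 2) :
    ∃ E : (Fin n → X) → MatPow d n, (∀ xs, IsStarProjection (E xs)) ∧
      (∀ xs, (E xs).trace.re ≤ 2 ^ (n * condEntropy P W + c)) ∧
      1 - ε ≤ ∑ xs, (∏ i, P (xs i)) * (tensorPow (fun i => W (xs i)) * E xs).trace.re := by
  choose U r hU hr hH using fun x => (hW x).exists_eq_ofEigen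
  refine ⟨fun xs => spectralProj (tensorUnitary fun i => U (xs i))
    (entropyTypical (fun i => r (xs i)) (n * condEntropy P W) c),
    fun xs => isStarProjection_spectralProj _ _, fun xs => ?_, ?_⟩
  · rw [re_trace_spectralProj]
    exact card_entropyTypical_le (fun i => hr (xs i)) _ _
  · simp only [condEntropy, hH]
    simp only [re_trace_mul_spectralProj, hU, tensorPow_ofEigen, measDist_ofEigen]
    exact one_sub_le_sum_mul_sum_entropyTypical hP hr hc (by rwa [Fintype.card_fin])

theorem exists_isPartialCode_tensorPow (hW : ∀ x, IsState (W x)) (hP : IsProbDist P)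
    {lam c ε : ℝ} (hlam : lam ∈ Set.Ioo 0 1) (hε : ε ≤ lam ^ 2 / 16) (hc : 0 < c)
    (hn : n * (d * Kconst ^ 2) ≤ ε * c ^ 2) :
    ∃ (R : ℝ) (k : ℕ) (f : Fin k → Fin n → X) (D : Fin k → MatPow d n),
      IsPartialCode (fun xs => tensorPow fun i => W (xs i)) lam R f D ∧
        ε * 2 ^ (n * mutualInfo P W - 2 * c) ≤ k := by
  obtain ⟨E, hE, hER, hEρ⟩ := exists_typical_effects hW hP hc hn
  obtain ⟨σ', -, hσ', hσθ, hσε⟩ :=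
    exists_truncation_tensorPow (fun _ : Fin n => isState_avgState hP hW) hc hn
  rw [tensorPow_avgState] at hσ' hσε
  obtain ⟨k, f, D, hD, hk⟩ := exists_isPartialCode
    (fun xs : Fin n → X => IsState.tensorPow fun i => hW (xs i)) (.prod fun _ => hP)
    (fun xs => (hE xs).nonneg) (fun xs => sub_nonneg.1 (hE xs).one_sub_nonneg) hER hlam hε
    (by positivity) hEρ hσ' hσθ hσε
  refine ⟨_, k, f, D, hD, ?_⟩
  rw [sum_const, card_univ, Fintype.card_fin, nsmul_eq_mul] at hk
  have cancel : (2 : ℝ) ^ (-(n * vnEntropy (avgState P W)) + c) * 2 ^ (n * condEntropy P W + c) *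
      2 ^ (n * mutualInfo P W - 2 * c) = 1 := by
    rw [← Real.rpow_add two_pos, ← Real.rpow_add two_pos, mutualInfo]
    ring_nf
    exact Real.rpow_zero 2
  calc ε * 2 ^ (n * mutualInfo P W - 2 * c)
      ≤ 2 ^ (-(n * vnEntropy (avgState P W)) + c) * (k * 2 ^ (n * condEntropy P W + c)) *
          2 ^ (n * mutualInfo P W - 2 * c) := by gcongr
    _ = k * 1 := by
        rw [← cancel]
        ring
    _ = k := mul_one _

end Direct

/-! ### The strong converse -/

section Converse

variable {X : Type*} [Fintype X] {d n : ℕ}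

/-- The type (empirical distribution) of a sequence. It vanishes for the empty sequence. -/
def seqType (xs : Fin n → X) (x : X) : ℝ :=
  countIn x xs / n

theorem sum_comp_eq_mul_sum_seqType (hn : 0 < n) (xs : Fin n → X) (g : X → ℝ) :
    ∑ i, g (xs i) = n * ∑ x, seqType xs x * g x := by
  have hn' : (n : ℝ) ≠ 0 := by exact_mod_cast hn.ne'
  rw [mul_sum, ← sum_fiberwise' univ xs g]
  refine sum_congr rfl fun x _ => ?_
  rw [sum_const, nsmul_eq_mul, seqType, ← mul_assoc, mul_div_cancel₀ _ hn', countIn]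

theorem isProbDist_seqType (hn : 0 < n) (xs : Fin n → X) : IsProbDist (seqType xs) := by
  have hn' : (n : ℝ) ≠ 0 := by exact_mod_cast hn.ne'
  refine ⟨fun x => div_nonneg (Nat.cast_nonneg _) (Nat.cast_nonneg _), ?_⟩
  simpa [hn'] using (sum_comp_eq_mul_sum_seqType hn xs fun _ => 1).symm

theorem card_image_seqType_le (A : Finset (Fin n → X)) :
    #(A.image seqType) ≤ (n + 1) ^ Fintype.card X := by
  have covered : A.image seqType ⊆
      univ.image fun (k : X → Fin (n + 1)) x => ((k x : ℕ) / n : ℝ) := by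
    refine image_subset_iff.2 fun xs _ => mem_image.2 ⟨fun x => ⟨countIn x xs, ?_⟩, mem_univ _, rfl⟩
    exact Nat.lt_succ_of_le ((card_filter_le _ _).trans_eq (card_fin n))
  exact (card_le_card covered).trans (card_image_le.trans_eq (by simp))

variable {W : X → Mat d}

theorem re_trace_tensorPow_mul_one_sub_le (hW : ∀ x, IsState (W x)) (hn : 0 < n) (xs : Fin n → X)
    {V : unitaryGroup (Fin d) ℂ} {s : Fin d → ℝ} (hs : IsProbDist s)
    (hV : avgState (seqType xs) W = ofEigen V s) {c ε : ℝ} (hc : 0 < c)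
    (hε : n * (d * Kconst ^ 2) ≤ ε * c ^ 2) :
    (tensorPow (fun i => W (xs i)) * (1 - spectralProj (tensorUnitary fun _ => V)
      (entropyTypical (fun _ => s) (n * shannonEntropy s) c))).trace.re ≤ ε := by
  have hp (i : Fin n) := (hW (xs i)).isProbDist_measDist V
  have marginal (j : Fin d) : ∑ i, measDist V (W (xs i)) j = n * s j := by
    rw [sum_comp_eq_mul_sum_seqType hn xs fun x => measDist V (W x) j, ← measDist_avgState, hV,
      measDist_ofEigen]
  have average (g : Fin d → ℝ) :
      ∑ i, ∑ j, measDist V (W (xs i)) j * g j = n * ∑ j, s j * g j := by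
    rw [sum_comm]
    simp only [← sum_mul, marginal, mul_sum, mul_assoc]
  have support (i : Fin n) (j : Fin d) (h : 0 < measDist V (W (xs i)) j) : 0 < s j := by
    have := h.trans_le (single_le_sum (fun k _ => (hp k).1 j) (mem_univ i))
    exact pos_of_mul_pos_right (marginal j ▸ this) (Nat.cast_nonneg n)
  have typical := one_sub_le_sum_entropyTypical hp (q := fun _ => s) support hc
    (h := n * shannonEntropy s) (ε := ε)
    (by rw [average, shannonEntropy, mul_neg, neg_neg])
    (by
      rw [average fun j => Real.logb 2 (s j) ^ 2]
      refine le_trans ?_ hε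
      gcongr
      simpa only [Fintype.card_fin] using hs.sum_mul_logb_sq_le)
  rw [mul_sub, mul_one, trace_sub, Complex.sub_re, (IsState.tensorPow fun i => hW (xs i)).2,
    Complex.one_re, re_trace_mul_spectralProj, sub_le_comm]
  simpa only [measDist_tensorPow _ fun i => (hW (xs i)).1.isHermitian] using typical

theorem re_trace_tensorPow_mul_le (hW : ∀ x, IsState (W x)) (hn : 0 < n) (xs : Fin n → X)
    {c ε : ℝ} (hc : 0 < c) (hε : n * (d * Kconst ^ 2) ≤ ε * c ^ 2) {T : MatPow d n} (hT : 0 ≤ T)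
    (hT1 : T ≤ 1) :
    (tensorPow (fun i => W (xs i)) * T).trace.re ≤
      3 * ε + 2 * 2 ^ (n * mutualInfo (seqType xs) W + 2 * c) *
        (tensorPow (fun _ => avgState (seqType xs) W) * T).trace.re := by
  obtain ⟨ρ', hρ', hle, hτ, hρε⟩ := exists_truncation_tensorPow (fun i => hW (xs i)) hc hε
  rw [sum_comp_eq_mul_sum_seqType hn xs fun x => vnEntropy (W x), ← condEntropy] at hτ
  obtain ⟨V, s, hV, hs, hH⟩ :=
    (isState_avgState (isProbDist_seqType hn xs) hW).exists_eq_ofEigen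
  have hQ := isStarProjection_spectralProj (tensorUnitary fun _ : Fin n => V)
    (entropyTypical (fun _ => s) (n * shannonEntropy s) c)
  have hQσ := smul_spectralProj_le (U := tensorUnitary fun _ : Fin n => V)
    (IsProbDist.prod fun _ => hs).1
    fun j (hj : j ∈ entropyTypical (fun _ => s) (n * shannonEntropy s) c) => (mem_filter.1 hj).2.1
  rw [← tensorPow_ofEigen] at hQσ
  have h := re_trace_mul_le_of_projection hρ' hle (by positivity) hτ hρε hQ (by positivity) hQσ
    (re_trace_tensorPow_mul_one_sub_le hW hn xs hs hV hc hε) hT hT1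
  rw [← Real.rpow_sub two_pos, ← hH, ← hV] at h
  convert h using 5
  rw [mutualInfo]
  ring

end Converse

/-! ### Code sizes and capacity -/

section CodeSize

variable {X : Type} [Fintype X] {d n : ℕ} {W : X → Mat d} {lam : ℝ}

theorem bddAbove_mutualInfo (hW : ∀ x, IsState (W x)) :
    BddAbove {c | ∃ P : X → ℝ, IsProbDist P ∧ c = mutualInfo P W} := by
  refine ⟨d * (Kconst / 2), ?_⟩
  rintro _ ⟨P, hP, rfl⟩
  obtain ⟨-, s, -, hs, hH⟩ := (isState_avgState hP hW).exists_eq_ofEigen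
  choose _ r _ hr hHr using fun x => (hW x).exists_eq_ofEigen
  have cond_nonneg : 0 ≤ condEntropy P W := sum_nonneg fun x _ =>
    mul_nonneg (hP.1 x) (hHr x ▸ (hr x).shannonEntropy_nonneg)
  have := hs.shannonEntropy_le
  rw [Fintype.card_fin] at this
  rw [mutualInfo, hH]
  linarith

/-- The sizes of all `(n, lam)`-codes for `W`. Their supremum is `maxCodeSize d W n lam`. -/
def codeSizes (W : X → Mat d) (n : ℕ) (lam : ℝ) : Set ℕ :=
  {k | ∃ (M' : Type) (_ : Fintype M') (M : Finset M') (f : M' → Fin n → X)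
    (D : M' → MatPow d n), IsCode W lam M f D ∧ M.card = k}

-- The extra outcome `none` collects what the decoding operators leave of the identity.
theorem IsPartialCode.mem_codeSizes [Nonempty X] {R : ℝ} {k : ℕ} {f : Fin k → Fin n → X}
    {D : Fin k → MatPow d n}
    (hD : IsPartialCode (fun xs => tensorPow fun i => W (xs i)) lam R f D) :
    k ∈ codeSizes W n lam := by
  refine ⟨Option (Fin k), inferInstance, univ.map .some, fun m => m.elim (Classical.arbitrary _) f,
    fun m => m.elim (1 - ∑ m, D m) D, ⟨?_, ?_, ?_⟩, ?_⟩
  · rintro (_ | m)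
    · exact le_iff.1 hD.sum_le_one
    · exact nonneg_iff_posSemidef.1 (hD.nonneg m)
  · rw [Fintype.sum_option]
    exact sub_add_cancel 1 _
  · simpa using hD.decodes
  · rw [card_map, card_fin]

theorem IsCode.mul_card_filter_seqType_le {M' : Type*} [Fintype M'] {M : Finset M'}
    {f : M' → Fin n → X} {D : M' → MatPow d n} (hD : IsCode W lam M f D)
    (hW : ∀ x, IsState (W x)) (hn : 0 < n) {c ε : ℝ} (hlam : 5 * ε ≤ 1 - lam) (hc : 0 < c)
    (hε : n * (d * Kconst ^ 2) ≤ ε * c ^ 2) (xs : Fin n → X) :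
    ε * #{m ∈ M | seqType (f m) = seqType xs} ≤
      2 ^ (n * mutualInfo (seqType xs) W + 2 * c) := by
  obtain ⟨hpos, hsum, hdec⟩ := hD
  have hnonneg (m : M') : 0 ≤ D m := nonneg_iff_posSemidef.2 (hpos m)
  have sum_le_one (A : Finset M') : ∑ m ∈ A, D m ≤ 1 :=
    hsum ▸ sum_le_univ_sum_of_nonneg hnonneg
  have hσ : IsState (tensorPow fun _ : Fin n => avgState (seqType xs) W) :=
    .tensorPow fun _ => isState_avgState (isProbDist_seqType hn xs) hW
  have each (m : M') (hm : m ∈ {m ∈ M | seqType (f m) = seqType xs}) :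
      ε ≤ 2 ^ (n * mutualInfo (seqType xs) W + 2 * c) *
        (tensorPow (fun _ => avgState (seqType xs) W) * D m).trace.re := by
    obtain ⟨hmM, htype⟩ := mem_filter.1 hm
    have h := (hdec m hmM).trans <|
      re_trace_tensorPow_mul_le hW hn (f m) hc hε (hnonneg m) (by simpa using sum_le_one {m})
    rw [htype] at h
    linarith
  have total := re_trace_mul_le hσ.nonneg (sum_le_one {m ∈ M | seqType (f m) = seqType xs})
  rw [hσ.2, Complex.one_re, mul_sum, trace_sum, Complex.re_sum] at total
  calc ε * #{m ∈ M | seqType (f m) = seqType xs}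
      ≤ 2 ^ (n * mutualInfo (seqType xs) W + 2 * c) * ∑ m ∈ M with seqType (f m) = seqType xs,
          (tensorPow (fun _ => avgState (seqType xs) W) * D m).trace.re := by
        rw [mul_comm, ← nsmul_eq_mul, mul_sum]
        exact card_nsmul_le_sum _ _ _ each
    _ ≤ _ := mul_le_of_le_one_right (by positivity) total

theorem mul_le_of_mem_codeSizes (hW : ∀ x, IsState (W x)) (hn : 0 < n) {c ε : ℝ}
    (hlam : 5 * ε ≤ 1 - lam) (hc : 0 < c) (hε : n * (d * Kconst ^ 2) ≤ ε * c ^ 2) {k : ℕ}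
    (hk : k ∈ codeSizes W n lam) :
    ε * k ≤ (n + 1) ^ Fintype.card X * 2 ^ (n * capacity W + 2 * c) := by
  obtain ⟨M', _, M, f, D, hD, rfl⟩ := hk
  have fiber_le (P) (hP : P ∈ (M.image f).image seqType) :
      ε * #{m ∈ M | seqType (f m) = P} ≤ 2 ^ (n * capacity W + 2 * c) := by
    obtain ⟨xs, -, rfl⟩ := mem_image.1 hP
    have : mutualInfo (seqType xs) W ≤ capacity W :=
      le_csSup (bddAbove_mutualInfo hW) ⟨_, isProbDist_seqType hn xs, rfl⟩
    exact (hD.mul_card_filter_seqType_le hW hn hlam hc hε xs).trans <| by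
      gcongr
      exact one_le_two
  have types : (#((M.image f).image seqType) : ℝ) ≤ (n + 1) ^ Fintype.card X := by
    exact_mod_cast card_image_seqType_le (M.image f)
  calc ε * #M = ∑ P ∈ (M.image f).image seqType, ε * #{m ∈ M | seqType (f m) = P} := by
        rw [← mul_sum, image_image, card_eq_sum_card_image (seqType ∘ f) M, Nat.cast_sum]
        rfl
    _ ≤ #((M.image f).image seqType) * 2 ^ (n * capacity W + 2 * c) := by
        rw [← nsmul_eq_mul]
        exact sum_le_card_nsmul _ _ _ fiber_le
    _ ≤ _ := by gcongr

theorem capacity_of_isEmpty [IsEmpty X] : capacity W = 0 := by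
  refine (congrArg sSup (Set.eq_empty_of_forall_notMem ?_)).trans Real.sSup_empty
  rintro _ ⟨P, hP, -⟩
  exact zero_ne_one ((Fintype.sum_empty P).symm.trans hP.2)

theorem maxCodeSize_of_isEmpty [IsEmpty X] (hn : 0 < n) : maxCodeSize d W n lam = 0 := by
  refine Nat.le_zero.1 (csSup_le' ?_)
  rintro _ ⟨M', _, M, f, -, -, rfl⟩
  have : IsEmpty M' := ⟨fun m => isEmptyElim (f m ⟨0, hn⟩)⟩
  rw [Finset.eq_empty_of_isEmpty M, card_empty]

theorem bddAbove_codeSizes (hW : ∀ x, IsState (W x)) (hn : 0 < n) {c ε : ℝ} (hε : 0 < ε)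
    (hlam : 5 * ε ≤ 1 - lam) (hc : 0 < c) (hnc : n * (d * Kconst ^ 2) ≤ ε * c ^ 2) :
    BddAbove (codeSizes W n lam) :=
  ⟨_, fun _ hk => Nat.le_floor <|
    (le_div_iff₀' hε).2 <| mul_le_of_mem_codeSizes hW hn hlam hc hnc hk⟩

theorem mul_two_rpow_le_maxCodeSize [Nonempty X] {P : X → ℝ} (hP : IsProbDist P)
    (hW : ∀ x, IsState (W x)) (hn : 0 < n) (hlam : lam ∈ Set.Ioo 0 1) {c ε : ℝ} (hε : 0 < ε)
    (hε0 : ε ≤ lam ^ 2 / 16) (hε1 : 5 * ε ≤ 1 - lam) (hc : 0 < c)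
    (hnc : n * (d * Kconst ^ 2) ≤ ε * c ^ 2) :
    ε * 2 ^ (n * mutualInfo P W - 2 * c) ≤ maxCodeSize d W n lam := by
  obtain ⟨R, k, f, D, hD, hk⟩ := exists_isPartialCode_tensorPow hW hP hlam hε0 hc hnc
  refine hk.trans (Nat.cast_le.2 ?_)
  exact le_csSup (bddAbove_codeSizes hW hn hε hε1 hc hnc) hD.mem_codeSizes

theorem abs_logb_maxCodeSize_sub_le [Nonempty X] (hW : ∀ x, IsState (W x)) (hn : 0 < n)
    (hlam : lam ∈ Set.Ioo 0 1) {c ε : ℝ} (hε : 0 < ε) (hε0 : ε ≤ lam ^ 2 / 16)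
    (hε1 : 5 * ε ≤ 1 - lam) (hc : 0 < c) (hnc : n * (d * Kconst ^ 2) ≤ ε * c ^ 2) :
    |Real.logb 2 (maxCodeSize d W n lam) - n * capacity W| ≤
      Fintype.card X * Real.logb 2 (n + 1) + 2 * c - Real.logb 2 ε := by
  have attained {P : X → ℝ} (hP : IsProbDist P) :=
    mul_two_rpow_le_maxCodeSize hP hW hn hlam hε hε0 hε1 hc hnc
  have pointMass := isProbDist_seqType hn fun _ => Classical.arbitrary X
  have pos : 0 < (maxCodeSize d W n lam : ℝ) := (by positivity : (0 : ℝ) < _).trans_le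
    (attained pointMass)
  have converse : Real.logb 2 ε + Real.logb 2 (maxCodeSize d W n lam) ≤
      Fintype.card X * Real.logb 2 (n + 1) + (n * capacity W + 2 * c) := by
    obtain ⟨_, _, _, _, hD, -⟩ := exists_isPartialCode_tensorPow hW pointMass hlam hε0 hc hnc
    have maximal : maxCodeSize d W n lam ∈ codeSizes W n lam :=
      Nat.sSup_mem ⟨_, hD.mem_codeSizes⟩ (bddAbove_codeSizes hW hn hε hε1 hc hnc)
    have := Real.logb_le_logb_of_le one_lt_two (mul_pos hε pos)
      (mul_le_of_mem_codeSizes hW hn hε1 hc hnc maximal)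
    rwa [Real.logb_mul hε.ne' pos.ne', Real.logb_mul (by positivity) (by positivity),
      Real.logb_pow, Real.logb_rpow two_pos (by norm_num)] at this
  have direct : n * capacity W ≤ Real.logb 2 (maxCodeSize d W n lam) + 2 * c - Real.logb 2 ε := by
    rw [← le_div_iff₀' (Nat.cast_pos.2 hn)]
    refine csSup_le ⟨_, _, pointMass, rfl⟩ ?_
    rintro _ ⟨P, hP, rfl⟩
    rw [le_div_iff₀' (Nat.cast_pos.2 hn)]
    have := Real.logb_le_logb_of_le one_lt_two (by positivity) (attained hP)
    rw [Real.logb_mul hε.ne' (by positivity), Real.logb_rpow two_pos (by norm_num)] at this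
    linarith
  have types_nonneg : 0 ≤ Fintype.card X * Real.logb 2 (n + 1) :=
    mul_nonneg (Nat.cast_nonneg _) (Real.logb_nonneg one_lt_two (by simp))
  rw [abs_le]
  constructor <;> linarith

theorem logb_two_succ_le (n : ℕ) : Real.logb 2 (n + 1) ≤ 2 / Real.log 2 * √n := by
  have h : Real.log (n + 1) ≤ 2 * √n :=
    calc Real.log (n + 1) ≤ Real.log ((√n + 1) ^ 2) := by
          gcongr
          nlinarith [Real.sq_sqrt (Nat.cast_nonneg (α := ℝ) n), Real.sqrt_nonneg n]
      _ = 2 * Real.log (√n + 1) := by rw [Real.log_pow, Nat.cast_ofNat]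
      _ ≤ 2 * √n := by
          gcongr
          linarith [Real.log_le_sub_one_of_pos (show 0 < √n + 1 by positivity)]
  rw [Real.logb, div_mul_eq_mul_div]
  exact div_le_div_of_nonneg_right h (Real.log_nonneg one_le_two)

theorem exists_coding_constants (d : ℕ) (hlam : lam ∈ Set.Ioo 0 1) :
    ∃ ε > 0, ε ≤ lam ^ 2 / 16 ∧ 5 * ε ≤ 1 - lam ∧ ∃ κ > 0, d * Kconst ^ 2 ≤ ε * κ ^ 2 := by
  obtain ⟨h0, h1⟩ := hlam
  have hε : 0 < min (lam ^ 2 / 16) ((1 - lam) / 5) :=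
    lt_min (by positivity) (div_pos (sub_pos.2 h1) (by norm_num))
  refine ⟨_, hε, min_le_left _ _, ?_, √(d * Kconst ^ 2 / min (lam ^ 2 / 16) ((1 - lam) / 5) + 1),
    by positivity, ?_⟩
  · rw [← le_div_iff₀' (by norm_num)]
    exact min_le_right _ _
  · rw [Real.sq_sqrt (by positivity), mul_add, mul_div_cancel₀ _ hε.ne']
    exact le_add_of_nonneg_right (by rw [mul_one]; exact hε.le)

end CodeSize

/-- **Theorem 1 (Coding theorem and strong converse).** For every `λ ∈ (0,1)` there is
a constant `K(λ,a,d)` such that for all cq-DMCs `W` (with input alphabet of size `a`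
and output states on `ℂ^d`) and all positive integers `n`,
`|log₂ N(n,λ) − n C(W)| ≤ K √n`. -/
theorem coding_theorem_and_strong_converse (a d : ℕ) (lam : ℝ)
    (hlam : lam ∈ Set.Ioo (0 : ℝ) 1) :
    ∃ K : ℝ, ∀ (X : Type) [Fintype X], Fintype.card X = a →
      ∀ W : X → Mat d, (∀ x, IsState (W x)) →
        ∀ n : ℕ, 0 < n →
          |Real.logb 2 (maxCodeSize d W n lam) - n * capacity W| ≤ K * Real.sqrt n := by
  obtain ⟨ε, hε, hε0, hε1, κ, hκ, hεκ⟩ := exists_coding_constants d hlam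
  have log_nonpos : Real.logb 2 ε ≤ 0 := Real.logb_nonpos one_lt_two hε.le (by linarith [hlam.1])
  refine ⟨a * (2 / Real.log 2) + 2 * κ - Real.logb 2 ε, fun X _ ha W hW n hn => ?_⟩
  obtain _ | _ := isEmpty_or_nonempty X
  · rw [maxCodeSize_of_isEmpty hn, capacity_of_isEmpty]
    simpa using mul_nonneg (sub_nonneg.2 (log_nonpos.trans (by positivity))) (Real.sqrt_nonneg n)
  have deviation : n * (d * Kconst ^ 2) ≤ ε * (√n * κ) ^ 2 := by
    rw [mul_pow, Real.sq_sqrt (Nat.cast_nonneg n), mul_left_comm ε]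
    exact mul_le_mul_of_nonneg_left hεκ (Nat.cast_nonneg n)
  have one_le_sqrt : 1 ≤ √(n : ℝ) := Real.one_le_sqrt.2 (Nat.one_le_cast.2 hn)
  calc |Real.logb 2 (maxCodeSize d W n lam) - n * capacity W|
      ≤ a * Real.logb 2 (n + 1) + 2 * (√n * κ) - Real.logb 2 ε :=
        ha ▸ abs_logb_maxCodeSize_sub_le hW hn hlam hε hε0 hε1 (by positivity) deviation
    _ ≤ a * (2 / Real.log 2 * √n) + 2 * (√n * κ) - Real.logb 2 ε * √n := by
        gcongr
        · exact logb_two_succ_le n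
        · exact mul_le_of_one_le_right log_nonpos one_le_sqrt
    _ = (a * (2 / Real.log 2) + 2 * κ - Real.logb 2 ε) * √n := by ring
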